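/- arXiv:1905.01202 — 4 statements merged into one kernel-verified Lean document; each statement's English description precedes it below -/
import Mathlib

section
/- Let X be a Banach space, U an evolution operator on X, P a family of projectors compatible with U with complementary family Q, V the associated map with U(t,s)V(t,s)Q(t)x = Q(t)x and V(t,s)U(t,s)Q(s)x = Q(s)x, and h, k growth rates. Then the pair (U,P) has (h,k)-growth if and only if there exists a nondecreasing map M : ℝ₊ → [1,∞) such that for all t ≥ s ≥ 0 and x ∈ X: (hg₁′) h(s)‖U(t,s)P(s)x‖ ≤ M(s)h(t)‖P(s)x‖ and (kg₂′) k(s)‖V(t,s)Q(t)x‖ ≤ M(t)k(t)‖Q(t)x‖. -/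
open Set Filter Real

variable {X : Type*} [NormedAddCommGroup X] [NormedSpace ℝ X] [CompleteSpace X]

/-- `U : Δ → B(X)` is an evolution operator on `X`. -/
def EvolutionOperator (U : ℝ → ℝ → X →L[ℝ] X) : Prop :=
  (∀ t : ℝ, 0 ≤ t → U t t = ContinuousLinearMap.id ℝ X) ∧
  (∀ t s t₀ : ℝ, 0 ≤ t₀ → t₀ ≤ s → s ≤ t → U t t₀ = (U t s).comp (U s t₀))

/-- `P : ℝ₊ → B(X)` is a family of projectors on `X`. -/
def ProjectorFamily (P : ℝ → X →L[ℝ] X) : Prop :=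
  ∀ t : ℝ, 0 ≤ t → (P t).comp (P t) = P t

/-- `P` is invariant for the evolution operator `U`. -/
def InvariantFor (U : ℝ → ℝ → X →L[ℝ] X) (P : ℝ → X →L[ℝ] X) : Prop :=
  ∀ t s : ℝ, 0 ≤ s → s ≤ t → ∀ x : X, U t s (P s x) = P t (U t s x)

/-- `P` is compatible with `U` : it is invariant for `U` and for every `t ≥ s ≥ 0`
the restriction of `U t s` to `Ker P s` is an isomorphism from `Ker P s` onto
`Ker P t` (a bounded bijection between these closed subspaces of the Banach
space `X`, hence an isomorphism). -/
def CompatibleWith (U : ℝ → ℝ → X →L[ℝ] X) (P : ℝ → X →L[ℝ] X) : Prop :=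
  InvariantFor U P ∧
  ∀ t s : ℝ, 0 ≤ s → s ≤ t →
    Set.BijOn (U t s) {x : X | P s x = 0} {x : X | P t x = 0}

/-- a growth rate : a nondecreasing map `ℝ₊ → [1, ∞)` tending to `∞`. -/
def GrowthRate (h : ℝ → ℝ) : Prop :=
  MonotoneOn h (Ici (0 : ℝ)) ∧ (∀ t : ℝ, 0 ≤ t → 1 ≤ h t) ∧ Tendsto h atTop atTop

/-- a nondecreasing map `ℝ₊ → [1, ∞)`. -/
def Nondecr1 (N : ℝ → ℝ) : Prop :=
  MonotoneOn N (Ici (0 : ℝ)) ∧ ∀ t : ℝ, 0 ≤ t → 1 ≤ N t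

/-- the pair `(U, P)` is (nonuniformly) `(h,k)`-dichotomic; here
`Q t x = x - P t x` is the complementary family of projectors. -/
def Dichotomic (U : ℝ → ℝ → X →L[ℝ] X) (P : ℝ → X →L[ℝ] X) (h k : ℝ → ℝ) : Prop :=
  ∃ N : ℝ → ℝ, Nondecr1 N ∧
    ∀ t s : ℝ, 0 ≤ s → s ≤ t → ∀ x : X,
      h t * ‖U t s (P s x)‖ ≤ N s * (h s * ‖P s x‖) ∧
      k t * ‖x - P s x‖ ≤ N t * (k s * ‖U t s (x - P s x)‖)

/-- the pair `(U, P)` has `(h,k)`-growth. -/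
def HasGrowth (U : ℝ → ℝ → X →L[ℝ] X) (P : ℝ → X →L[ℝ] X) (h k : ℝ → ℝ) : Prop :=
  ∃ M : ℝ → ℝ, Nondecr1 M ∧
    ∀ t s : ℝ, 0 ≤ s → s ≤ t → ∀ x : X,
      h s * ‖U t s (P s x)‖ ≤ M s * (h t * ‖P s x‖) ∧
      k s * ‖x - P s x‖ ≤ M t * (k t * ‖U t s (x - P s x)‖)

/-- `f : X → ℝ` is a norm on `X`. -/
def IsNormOn (f : X → ℝ) : Prop :=
  (∀ x : X, 0 ≤ f x) ∧ (∀ x : X, f x = 0 ↔ x = 0) ∧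
  (∀ (a : ℝ) (x : X), f (a • x) = |a| * f x) ∧
  (∀ x y : X, f (x + y) ≤ f x + f y)

/-- a family of norms `{‖·‖_t : t ≥ 0}` compatible with the family of
projectors `P` (with complementary family `Q t x = x - P t x`). -/
def CompatibleNorms (P : ℝ → X →L[ℝ] X) (nn : ℝ → X → ℝ) : Prop :=
  (∀ t : ℝ, 0 ≤ t → IsNormOn (nn t)) ∧
  ∃ N : ℝ → ℝ, Nondecr1 N ∧
    ∀ t : ℝ, 0 ≤ t → ∀ x : X,
      ‖x‖ ≤ nn t x ∧ nn t x ≤ N t * (‖P t x‖ + ‖x - P t x‖)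

theorem forall_mem_iff_forall_mem_of_invOn {α β : Type*} {f : α → β} {g : β → α}
    {s : Set α} {t : Set β} (hinv : InvOn g f s t) (hf : MapsTo f s t) (hg : MapsTo g t s)
    (r : α → β → Prop) : (∀ y ∈ s, r y (f y)) ↔ ∀ z ∈ t, r (g z) z where
  mp H z hz := by simpa only [hinv.2 hz] using H (g z) (hg hz)
  mpr H y hy := by simpa only [hinv.1 hy] using H (f y) (hf hy)

section

variable {E : Type*} [NormedAddCommGroup E] [NormedSpace ℝ E]

/-- The range of the projector complementary to `p`, that is, of `Q = I - p`. -/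
def complRange (p : E →L[ℝ] E) : Set E :=
  range fun x => x - p x

/-- `V` is the backward evolution associated with `U` on the ranges of the complementary
projectors `Q t = I - P t`. The values of `V t s` outside the range of `Q t` are irrelevant,
so `V t s` is taken to be a plain function. -/
structure IsComplInverse (U : ℝ → ℝ → E →L[ℝ] E) (V : ℝ → ℝ → E → E)
    (P : ℝ → E →L[ℝ] E) : Prop where
  right_inv : ∀ t s : ℝ, 0 ≤ s → s ≤ t → ∀ x : E, U t s (V t s (x - P t x)) = x - P t x
  left_inv : ∀ t s : ℝ, 0 ≤ s → s ≤ t → ∀ x : E, V t s (U t s (x - P s x)) = x - P s x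
  eq_sub : ∀ t s : ℝ, 0 ≤ s → s ≤ t → ∀ x : E,
    V t s (x - P t x) = V t s (x - P t x) - P s (V t s (x - P t x))

variable {U : ℝ → ℝ → E →L[ℝ] E} {V : ℝ → ℝ → E → E} {P : ℝ → E →L[ℝ] E} {t s : ℝ}

theorem InvariantFor.mapsTo_complRange (hP : InvariantFor U P) (hs : 0 ≤ s) (hst : s ≤ t) :
    MapsTo (U t s) (complRange (P s)) (complRange (P t)) := by
  rintro _ ⟨x, rfl⟩
  exact ⟨U t s x, by rw [map_sub, hP t s hs hst]⟩

namespace IsComplInverse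

theorem mapsTo_complRange (hV : IsComplInverse U V P) (hs : 0 ≤ s) (hst : s ≤ t) :
    MapsTo (V t s) (complRange (P t)) (complRange (P s)) := by
  rintro _ ⟨x, rfl⟩
  exact ⟨V t s (x - P t x), (hV.eq_sub t s hs hst x).symm⟩

theorem invOn_complRange (hV : IsComplInverse U V P) (hs : 0 ≤ s) (hst : s ≤ t) :
    InvOn (V t s) (U t s) (complRange (P s)) (complRange (P t)) :=
  ⟨forall_mem_range.2 (hV.left_inv t s hs hst), forall_mem_range.2 (hV.right_inv t s hs hst)⟩

theorem forall_compl_iff (hV : IsComplInverse U V P) (hP : InvariantFor U P)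
    (hs : 0 ≤ s) (hst : s ≤ t) (r : E → E → Prop) :
    (∀ x, r (x - P s x) (U t s (x - P s x))) ↔ ∀ x, r (V t s (x - P t x)) (x - P t x) := by
  have key := forall_mem_iff_forall_mem_of_invOn (hV.invOn_complRange hs hst)
    (hP.mapsTo_complRange hs hst) (hV.mapsTo_complRange hs hst) r
  simpa only [complRange, forall_mem_range] using key

end IsComplInverse

theorem stmt2_general {h k : ℝ → ℝ} (hP : InvariantFor U P) (hV : IsComplInverse U V P) :
    HasGrowth U P h k ↔
      ∃ M : ℝ → ℝ, Nondecr1 M ∧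
        ∀ t s : ℝ, 0 ≤ s → s ≤ t → ∀ x : E,
          h s * ‖U t s (P s x)‖ ≤ M s * (h t * ‖P s x‖) ∧
          k s * ‖V t s (x - P t x)‖ ≤ M t * (k t * ‖x - P t x‖) := by
  refine exists_congr fun M => and_congr_right fun _ => forall₄_congr fun t s hs hst => ?_
  rw [forall_and, forall_and]
  -- Both backward estimates compare the norms of the same pairs `(y, U t s y) = (V t s z, z)`.
  exact and_congr_right fun _ =>
    hV.forall_compl_iff hP hs hst fun y z => k s * ‖y‖ ≤ M t * (k t * ‖z‖)

end

/-- Proposition 2.13 : if `P` is compatible with `U` then `(U,P)` has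
`(h,k)`-growth iff `(hg₁')` and `(kg₂')` hold for some nondecreasing
`M : ℝ₊ → [1,∞)`. -/
theorem stmt2 (U V : ℝ → ℝ → X →L[ℝ] X) (P : ℝ → X →L[ℝ] X) (h k : ℝ → ℝ)
    (hU : EvolutionOperator U) (hP : ProjectorFamily P) (hC : CompatibleWith U P)
    (hh : GrowthRate h) (hk : GrowthRate k)
    (hv1 : ∀ t s : ℝ, 0 ≤ s → s ≤ t → ∀ x : X, U t s (V t s (x - P t x)) = x - P t x)
    (hv2 : ∀ t s : ℝ, 0 ≤ s → s ≤ t → ∀ x : X, V t s (U t s (x - P s x)) = x - P s x)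
    (hv4 : ∀ t s : ℝ, 0 ≤ s → s ≤ t → ∀ x : X,
      V t s (x - P t x) = V t s (x - P t x) - P s (V t s (x - P t x)))
    :
    HasGrowth U P h k ↔
      ∃ M : ℝ → ℝ, Nondecr1 M ∧
        ∀ t s : ℝ, 0 ≤ s → s ≤ t → ∀ x : X,
          h s * ‖U t s (P s x)‖ ≤ M s * (h t * ‖P s x‖) ∧
          k s * ‖V t s (x - P t x)‖ ≤ M t * (k t * ‖x - P t x‖) :=
  stmt2_general hC.1 ⟨hv1, hv2, hv4⟩
end

section
/- Let X be a Banach space, U an evolution operator on X, P a family of projectors compatible with U with complementary family Q, V the associated map, and h, k growth rates. If the pair (U,P) has (h,k)-growth, then the family of norms defined by ‖x‖_t = sup_{τ ≥ t} (h(t)/h(τ))‖U(τ,t)P(t)x‖ + sup_{0 ≤ τ ≤ t} (k(τ)/k(t))‖V(t,τ)Q(t)x‖ is compatible with the family of projectors P; more precisely, each ‖·‖_t is a norm on X and ‖x‖ ≤ ‖x‖_t ≤ M(t)(‖P(t)x‖ + ‖Q(t)x‖) for all t ≥ 0, x ∈ X, where M is the nondecreasing function from the (h,k)-growth property. -/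
open Set Filter Real

variable {X : Type*} [NormedAddCommGroup X] [NormedSpace ℝ X] [CompleteSpace X]

/-- the Lyapunov type family of norms built from the `(h,k)`-growth property:
`‖x‖_t = sup_{τ ≥ t} (h t / h τ)‖U(τ,t)P(t)x‖ + sup_{0 ≤ τ ≤ t} (k τ / k t)‖V(t,τ)Q(t)x‖`. -/
noncomputable def lyapG (U V : ℝ → ℝ → X →L[ℝ] X) (P : ℝ → X →L[ℝ] X)
    (h k : ℝ → ℝ) (t : ℝ) (x : X) : ℝ :=
  (⨆ τ : Ici t, (h t / h (τ : ℝ)) * ‖U (τ : ℝ) t (P t x)‖) +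
  (⨆ τ : Icc (0 : ℝ) t, (k (τ : ℝ) / k t) * ‖V t (τ : ℝ) (x - P t x)‖)

/-- the Lyapunov type family of norms built from the `(h,k)`-dichotomy property:
`|||x|||_t = sup_{τ ≥ t} (h τ / h t)‖U(τ,t)P(t)x‖ + sup_{0 ≤ τ ≤ t} (k t / k τ)‖V(t,τ)Q(t)x‖`. -/
noncomputable def lyapD (U V : ℝ → ℝ → X →L[ℝ] X) (P : ℝ → X →L[ℝ] X)
    (h k : ℝ → ℝ) (t : ℝ) (x : X) : ℝ :=
  (⨆ τ : Ici t, (h (τ : ℝ) / h t) * ‖U (τ : ℝ) t (P t x)‖) +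
  (⨆ τ : Icc (0 : ℝ) t, (k t / k (τ : ℝ)) * ‖V t (τ : ℝ) (x - P t x)‖)

/-!
Each of the two suprema in `lyapG` is a seminorm, provided it is finite. The growth bound on
`Range (P t)` bounds every term of the first supremum by `M t * ‖P t x‖`. Applied to
`V t τ (x - P t x)`, which lies in `Ker (P τ)` and is mapped to `x - P t x` by `U t τ`, the growth
bound on the kernels does the same for the second. In the other direction, the terms at `τ = t` are
`‖P t x‖` and `‖x - P t x‖`, whose sum dominates `‖x‖`; hence the sum of the seminorms is a norm.
-/

theorem div_mul_le_of_mul_le_mul_mul {𝕜 : Type*} [Field 𝕜] [LinearOrder 𝕜] [IsStrictOrderedRing 𝕜]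
    {a b c d C : 𝕜} (hb : 0 < b) (h : a * c ≤ C * (b * d)) : a / b * c ≤ C * d := by
  rwa [div_mul_eq_mul_div, div_le_iff₀ hb, mul_assoc, mul_comm d]

section Seminorms

theorem isNormOn_of_norm_le {E : Type*} [NormedAddCommGroup E] [NormedSpace ℝ E]
    (p : Seminorm ℝ E) (hp : ∀ x, ‖x‖ ≤ p x) : IsNormOn p :=
  ⟨apply_nonneg p,
    fun x => ⟨fun hx => norm_le_zero_iff.1 (hx ▸ hp x), fun hx => hx ▸ map_zero p⟩,
    map_smul_eq_mul p, map_add_le_add p⟩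

variable {𝕜 ι E F : Type*} [NormedField 𝕜] [AddCommGroup E] [Module 𝕜 E]
  [SeminormedAddCommGroup F] [NormedSpace 𝕜 F]

/-- The weighted supremum `x ↦ ⨆ i, w i * ‖A i x‖` of a family of linear maps, as a seminorm.
Negative weights are truncated to `0`, and for a family that is not pointwise bounded the whole
seminorm has the junk value `0`. -/
noncomputable def weightedSupSeminorm (w : ι → ℝ) (A : ι → E →ₗ[𝕜] F) : Seminorm 𝕜 E :=
  ⨆ i, (w i).toNNReal • (normSeminorm 𝕜 F).comp (A i)

theorem weightedSupSeminorm_apply {w : ι → ℝ} {A : ι → E →ₗ[𝕜] F} (hw : ∀ i, 0 ≤ w i)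
    (hA : ∀ x, BddAbove (range fun i => w i * ‖A i x‖)) (x : E) :
    weightedSupSeminorm w A x = ⨆ i, w i * ‖A i x‖ := by
  have term_apply (i : ι) (y : E) :
      ((w i).toNNReal • (normSeminorm 𝕜 F).comp (A i)) y = w i * ‖A i y‖ := by
    simp [NNReal.smul_def, hw i]
  have bdd : BddAbove (range fun i => (w i).toNNReal • (normSeminorm 𝕜 F).comp (A i)) :=
    Seminorm.bddAbove_range_iff.2 fun y => by simpa only [term_apply] using hA y
  simp only [weightedSupSeminorm, Seminorm.iSup_apply bdd, term_apply]

end Seminorms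

section Lyapunov

variable {E : Type*} [NormedAddCommGroup E] [NormedSpace ℝ E]
  {U V : ℝ → ℝ → E →L[ℝ] E} {P : ℝ → E →L[ℝ] E} {h k : ℝ → ℝ} {s t C : ℝ}

theorem mul_norm_backward_le_of_growth {x : E}
    (hgrow : ∀ y, k s * ‖y - P s y‖ ≤ C * (k t * ‖U t s (y - P s y)‖))
    (hUV : U t s (V t s (x - P t x)) = x - P t x) (hPV : P s (V t s (x - P t x)) = 0) :
    k s * ‖V t s (x - P t x)‖ ≤ C * (k t * ‖x - P t x‖) := by
  simpa only [hPV, sub_zero, hUV] using hgrow (V t s (x - P t x))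

theorem lyapG_le (ht : 0 ≤ t)
    (hfwd : ∀ (τ : Ici t) (x : E), h t / h τ * ‖U τ t (P t x)‖ ≤ C * ‖P t x‖)
    (hbwd : ∀ (τ : Icc 0 t) (x : E), k τ / k t * ‖V t τ (x - P t x)‖ ≤ C * ‖x - P t x‖) (x : E) :
    lyapG U V P h k t x ≤ C * (‖P t x‖ + ‖x - P t x‖) := by
  have : Nonempty (Icc 0 t) := ⟨⟨t, ht, le_rfl⟩⟩
  rw [mul_add]
  exact add_le_add (ciSup_le (hfwd · x)) (ciSup_le (hbwd · x))

theorem norm_le_lyapG (ht : 0 ≤ t) (hh : h t ≠ 0) (hk : k t ≠ 0)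
    (hU : U t t = ContinuousLinearMap.id ℝ E) (hV : ∀ x, V t t (x - P t x) = x - P t x)
    (hfwd : ∀ x, BddAbove (range fun τ : Ici t => h t / h τ * ‖U τ t (P t x)‖))
    (hbwd : ∀ x, BddAbove (range fun τ : Icc 0 t => k τ / k t * ‖V t τ (x - P t x)‖)) (x : E) :
    ‖x‖ ≤ lyapG U V P h k t x := by
  have forward_ge : ‖P t x‖ ≤ ⨆ τ : Ici t, h t / h τ * ‖U τ t (P t x)‖ := by
    simpa [hh, hU] using le_ciSup (hfwd x) ⟨t, self_mem_Ici⟩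
  have backward_ge : ‖x - P t x‖ ≤ ⨆ τ : Icc 0 t, k τ / k t * ‖V t τ (x - P t x)‖ := by
    simpa only [div_self hk, one_mul, hV] using le_ciSup (hbwd x) ⟨t, ht, le_rfl⟩
  calc ‖x‖ = ‖P t x + (x - P t x)‖ := by rw [add_sub_cancel]
    _ ≤ ‖P t x‖ + ‖x - P t x‖ := norm_add_le _ _
    _ ≤ lyapG U V P h k t x := add_le_add forward_ge backward_ge

theorem exists_seminorm_eq_lyapG (ht : 0 ≤ t) (hh : ∀ τ, t ≤ τ → 0 ≤ h τ)
    (hk : ∀ τ, 0 ≤ τ → τ ≤ t → 0 ≤ k τ)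
    (hfwd : ∀ x, BddAbove (range fun τ : Ici t => h t / h τ * ‖U τ t (P t x)‖))
    (hbwd : ∀ x, BddAbove (range fun τ : Icc 0 t => k τ / k t * ‖V t τ (x - P t x)‖)) :
    ∃ p : Seminorm ℝ E, ⇑p = lyapG U V P h k t := by
  let forward : Seminorm ℝ E := weightedSupSeminorm (fun τ : Ici t => h t / h τ)
    fun τ => (U τ t ∘L P t).toLinearMap
  let backward : Seminorm ℝ E := weightedSupSeminorm (fun τ : Icc 0 t => k τ / k t)
    fun τ => (V t τ ∘L (.id ℝ E - P t)).toLinearMap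
  have forward_apply (x : E) : forward x = ⨆ τ : Ici t, h t / h τ * ‖U τ t (P t x)‖ :=
    weightedSupSeminorm_apply (fun τ : Ici t => div_nonneg (hh t le_rfl) (hh τ τ.2)) hfwd x
  have backward_apply (x : E) :
      backward x = ⨆ τ : Icc 0 t, k τ / k t * ‖V t τ (x - P t x)‖ :=
    weightedSupSeminorm_apply
      (fun τ : Icc 0 t => div_nonneg (hk τ τ.2.1 τ.2.2) (hk t ht le_rfl)) hbwd x
  refine ⟨forward + backward, funext fun x => ?_⟩
  rw [add_apply, forward_apply, backward_apply, lyapG]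

end Lyapunov

theorem stmt4_general {E : Type*} [NormedAddCommGroup E] [NormedSpace ℝ E]
    (U V : ℝ → ℝ → E →L[ℝ] E) (P : ℝ → E →L[ℝ] E) (h k M : ℝ → ℝ) (hU : EvolutionOperator U)
    (hh : ∀ t, 0 ≤ t → 0 < h t) (hk : ∀ t, 0 ≤ t → 0 < k t)
    (hUV : ∀ t s : ℝ, 0 ≤ s → s ≤ t → ∀ x : E, U t s (V t s (x - P t x)) = x - P t x)
    (hPV : ∀ t s : ℝ, 0 ≤ s → s ≤ t → ∀ x : E, P s (V t s (x - P t x)) = 0)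
    (hgrow : ∀ t s : ℝ, 0 ≤ s → s ≤ t → ∀ x : E,
      h s * ‖U t s (P s x)‖ ≤ M s * (h t * ‖P s x‖) ∧
      k s * ‖x - P s x‖ ≤ M t * (k t * ‖U t s (x - P s x)‖)) :
    (∀ t : ℝ, 0 ≤ t → IsNormOn (lyapG U V P h k t)) ∧
    (∀ t : ℝ, 0 ≤ t → ∀ x : E,
      ‖x‖ ≤ lyapG U V P h k t x ∧
      lyapG U V P h k t x ≤ M t * (‖P t x‖ + ‖x - P t x‖)) := by
  rw [← forall₂_and]
  intro t ht
  have hfwd (τ : Ici t) (x : E) : h t / h τ * ‖U τ t (P t x)‖ ≤ M t * ‖P t x‖ :=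
    div_mul_le_of_mul_le_mul_mul (hh τ (ht.trans τ.2)) (hgrow τ t ht τ.2 x).1
  have hbwd (τ : Icc 0 t) (x : E) : k τ / k t * ‖V t τ (x - P t x)‖ ≤ M t * ‖x - P t x‖ :=
    div_mul_le_of_mul_le_mul_mul (hk t ht) <| mul_norm_backward_le_of_growth
      (fun y => (hgrow t τ τ.2.1 τ.2.2 y).2) (hUV t τ τ.2.1 τ.2.2 x) (hPV t τ τ.2.1 τ.2.2 x)
  have bddAbove_fwd (x : E) : BddAbove (range fun τ : Ici t => h t / h τ * ‖U τ t (P t x)‖) :=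
    ⟨_, forall_mem_range.2 (hfwd · x)⟩
  have bddAbove_bwd (x : E) :
      BddAbove (range fun τ : Icc 0 t => k τ / k t * ‖V t τ (x - P t x)‖) :=
    ⟨_, forall_mem_range.2 (hbwd · x)⟩
  have hV (x : E) : V t t (x - P t x) = x - P t x := by
    simpa only [hU.1 t ht, ContinuousLinearMap.id_apply] using hUV t t ht le_rfl x
  have norm_le : ∀ x, ‖x‖ ≤ lyapG U V P h k t x :=
    norm_le_lyapG ht (hh t ht).ne' (hk t ht).ne' (hU.1 t ht) hV bddAbove_fwd bddAbove_bwd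
  obtain ⟨p, hp⟩ : ∃ p : Seminorm ℝ E, ⇑p = lyapG U V P h k t :=
    exists_seminorm_eq_lyapG ht (fun τ hτ => (hh τ (ht.trans hτ)).le) (fun τ hτ _ => (hk τ hτ).le)
      bddAbove_fwd bddAbove_bwd
  exact ⟨hp ▸ isNormOn_of_norm_le p (hp ▸ norm_le), fun x => ⟨norm_le x, lyapG_le ht hfwd hbwd x⟩⟩

/-- Example 3.3 : if `(U,P)` has `(h,k)`-growth with nondecreasing function `M`,
then the Lyapunov type family of norms `lyapG` is compatible with `P`: each
`‖·‖_t` is a norm and `‖x‖ ≤ ‖x‖_t ≤ M t (‖P t x‖ + ‖Q t x‖)`. -/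
theorem stmt4 (U V : ℝ → ℝ → X →L[ℝ] X) (P : ℝ → X →L[ℝ] X) (h k : ℝ → ℝ)
    (hU : EvolutionOperator U) (hP : ProjectorFamily P) (hC : CompatibleWith U P)
    (hh : GrowthRate h) (hk : GrowthRate k)
    (hv1 : ∀ t s : ℝ, 0 ≤ s → s ≤ t → ∀ x : X, U t s (V t s (x - P t x)) = x - P t x)
    (hv2 : ∀ t s : ℝ, 0 ≤ s → s ≤ t → ∀ x : X, V t s (U t s (x - P s x)) = x - P s x)
    (hv3 : ∀ t s t₀ : ℝ, 0 ≤ t₀ → t₀ ≤ s → s ≤ t → ∀ x : X,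
      V t t₀ (x - P t x) = V s t₀ (V t s (x - P t x)))
    (hv4 : ∀ t s : ℝ, 0 ≤ s → s ≤ t → ∀ x : X,
      V t s (x - P t x) = V t s (x - P t x) - P s (V t s (x - P t x)))
    (M : ℝ → ℝ) (hM : Nondecr1 M)
    (hgrow : ∀ t s : ℝ, 0 ≤ s → s ≤ t → ∀ x : X,
      h s * ‖U t s (P s x)‖ ≤ M s * (h t * ‖P s x‖) ∧
      k s * ‖x - P s x‖ ≤ M t * (k t * ‖U t s (x - P s x)‖)) :
    (∀ t : ℝ, 0 ≤ t → IsNormOn (lyapG U V P h k t)) ∧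
    (∀ t : ℝ, 0 ≤ t → ∀ x : X,
      ‖x‖ ≤ lyapG U V P h k t x ∧
      lyapG U V P h k t x ≤ M t * (‖P t x‖ + ‖x - P t x‖)) := by
  exact stmt4_general U V P h k M hU (fun t ht => one_pos.trans_le (hh.2.1 t ht))
    (fun t ht => one_pos.trans_le (hk.2.1 t ht)) hv1
    (fun t s hs hst x => sub_eq_self.1 (hv4 t s hs hst x).symm) hgrow
end

section
/- Let X be a Banach space, U an evolution operator on X, P a family of projectors compatible with U with complementary family Q, V the associated map, and h, k growth rates. Then the pair (U,P) is (h,k)-dichotomic if and only if there exists a family of norms {|||·|||_t : t ≥ 0} compatible with P such that for all t ≥ s ≥ 0 and x ∈ X: (hd₁″) h(t)|||U(t,s)P(s)x|||_t ≤ h(s)|||P(s)x|||_s and (kd₂″) k(t)|||V(t,s)Q(t)x|||_s ≤ k(s)|||Q(t)x|||_t. -/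
open Set Filter Real

variable {X : Type*} [NormedAddCommGroup X] [NormedSpace ℝ X] [CompleteSpace X]

/-
The norm at time `t` is `|||x|||_t = sup_{τ ≥ t} (h τ / h t) ‖U τ t (P t x)‖ +
sup_{0 ≤ r ≤ t} (k t / k r) ‖V t r (Q t x)‖`. The dichotomy makes both suprema finite and comparable
to `‖P t x‖` and `‖Q t x‖`. Moving from `s` to `t` along `U` shrinks the set of times in the first
supremum, and moving from `t` to `s` along `V` shrinks the one in the second, which leaves only the
change of weights. Reversing time and replacing `k` by `k⁻¹` exchanges the two suprema, so both are
instances of one construction.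
-/

theorem mul_le_mul_mul_of_mul_le_mul {R : Type*} [CommSemiring R] [PartialOrder R]
    [IsOrderedRing R] {a b c u u' v v' : R} (ha : 0 ≤ a) (hb : 0 ≤ b)
    (hu : u ≤ u') (huv : a * u' ≤ b * v') (hv : v' ≤ c * v) : a * u ≤ c * (b * v) :=
  calc a * u ≤ a * u' := mul_le_mul_of_nonneg_left hu ha
    _ ≤ b * v' := huv
    _ ≤ b * (c * v) := mul_le_mul_of_nonneg_left hv hb
    _ = c * (b * v) := mul_left_comm _ _ _

theorem GrowthRate.pos {h : ℝ → ℝ} (hh : GrowthRate h) (t : ℝ) (ht : 0 ≤ t) : 0 < h t :=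
  one_pos.trans_le (hh.2.1 t ht)

section Lyapunov

variable {ι E : Type*} [SeminormedAddCommGroup E] [NormedSpace ℝ E]
  {w : ι → ℝ} {T : ι → ι → E →L[ℝ] E} {S : ι → Set ι} {s t : ι} {C D : ℝ}

/-- The Lyapunov seminorm `x ↦ sup_{τ ∈ S t} (w τ / w t) ‖T τ t x‖` at time `t`, where `T τ t`
transports vectors from time `t` to time `τ`, and `S t` is the set of times reachable from `t`.
It is `0` unless the supremum is finite for every `x`. -/
noncomputable def lyapunovSeminorm (w : ι → ℝ) (T : ι → ι → E →L[ℝ] E) (S : ι → Set ι) (t : ι) :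
    Seminorm ℝ E :=
  ⨆ τ : S t, (normSeminorm ℝ E).comp ((w τ / w t) • T τ t : E →L[ℝ] E).toLinearMap

/-- The weighted growth of `T` from time `t` on is controlled by the constant `C`. The bound is
relative to `‖T t t x‖` because `T t t` is a projector, not the identity, in the applications. -/
structure WeightedBoundAt (w : ι → ℝ) (T : ι → ι → E →L[ℝ] E) (S : ι → Set ι) (t : ι) (C : ℝ) :
    Prop where
  mem_self : t ∈ S t
  weight_pos : ∀ τ ∈ S t, 0 < w τ
  weight_mul_norm_le : ∀ τ ∈ S t, ∀ x, w τ * ‖T τ t x‖ ≤ C * (w t * ‖T t t x‖)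

namespace WeightedBoundAt

theorem weight_self_pos (hC : WeightedBoundAt w T S t C) : 0 < w t :=
  hC.weight_pos t hC.mem_self

theorem isLUB_lyapunovSeminorm (hC : WeightedBoundAt w T S t C) (x : E) :
    IsLUB (range fun τ : S t => w τ / w t * ‖T τ t x‖) (lyapunovSeminorm w T S t x) := by
  have : Nonempty (S t) := ⟨⟨t, hC.mem_self⟩⟩
  have apply_eq (τ : S t) (y : E) :
      (normSeminorm ℝ E).comp ((w τ / w t) • T τ t : E →L[ℝ] E).toLinearMap y =
        w τ / w t * ‖T τ t y‖ := by
    have hpos : 0 < w τ / w t := div_pos (hC.weight_pos τ τ.2) hC.weight_self_pos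
    simp only [Seminorm.comp_apply, ContinuousLinearMap.coe_coe, coe_normSeminorm,
      smul_apply, norm_smul, Real.norm_eq_abs, abs_of_pos hpos]
  have bddAbove (y : E) : BddAbove (range fun τ : S t => w τ / w t * ‖T τ t y‖) := by
    refine ⟨C * ‖T t t y‖, forall_mem_range.2 fun τ => ?_⟩
    rw [div_mul_eq_mul_div, div_le_iff₀ hC.weight_self_pos]
    linarith [hC.weight_mul_norm_le τ τ.2 y]
  rw [lyapunovSeminorm, Seminorm.iSup_apply (Seminorm.bddAbove_range_iff.2 fun y => by
    simpa only [apply_eq] using bddAbove y)]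
  simpa only [apply_eq] using isLUB_ciSup (bddAbove x)

theorem weight_mul_norm_le_lyapunovSeminorm (hC : WeightedBoundAt w T S t C) {τ : ι}
    (hτ : τ ∈ S t) (x : E) : w τ * ‖T τ t x‖ ≤ w t * lyapunovSeminorm w T S t x := by
  have hle : w τ / w t * ‖T τ t x‖ ≤ lyapunovSeminorm w T S t x :=
    (hC.isLUB_lyapunovSeminorm x).1 ⟨⟨τ, hτ⟩, rfl⟩
  rwa [div_mul_eq_mul_div, div_le_iff₀' hC.weight_self_pos] at hle

theorem weight_mul_lyapunovSeminorm_le (hC : WeightedBoundAt w T S t C) {x : E} {b : ℝ}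
    (hb : ∀ τ ∈ S t, w τ * ‖T τ t x‖ ≤ b) : w t * lyapunovSeminorm w T S t x ≤ b := by
  rw [← le_div_iff₀' hC.weight_self_pos]
  refine (hC.isLUB_lyapunovSeminorm x).2 (forall_mem_range.2 fun τ => ?_)
  rw [div_mul_eq_mul_div]
  exact div_le_div_of_nonneg_right (hb τ τ.2) hC.weight_self_pos.le

theorem norm_self_le_lyapunovSeminorm (hC : WeightedBoundAt w T S t C) (x : E) :
    ‖T t t x‖ ≤ lyapunovSeminorm w T S t x :=
  le_of_mul_le_mul_left (hC.weight_mul_norm_le_lyapunovSeminorm hC.mem_self x) hC.weight_self_pos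

theorem lyapunovSeminorm_le (hC : WeightedBoundAt w T S t C) (x : E) :
    lyapunovSeminorm w T S t x ≤ C * ‖T t t x‖ := by
  refine le_of_mul_le_mul_left ?_ hC.weight_self_pos
  rw [mul_left_comm]
  exact hC.weight_mul_lyapunovSeminorm_le fun τ hτ => hC.weight_mul_norm_le τ hτ x

theorem lyapunovSeminorm_eq_zero (hC : WeightedBoundAt w T S t C) {x : E} (hx : T t t x = 0) :
    lyapunovSeminorm w T S t x = 0 :=
  le_antisymm (by simpa [hx] using hC.lyapunovSeminorm_le x) (apply_nonneg _ x)

theorem weight_mul_lyapunovSeminorm_map_le (hs : WeightedBoundAt w T S s C)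
    (ht : WeightedBoundAt w T S t D) (hst : S t ⊆ S s) {x : E}
    (hT : ∀ τ ∈ S t, T τ t (T t s x) = T τ s x) :
    w t * lyapunovSeminorm w T S t (T t s x) ≤ w s * lyapunovSeminorm w T S s x :=
  ht.weight_mul_lyapunovSeminorm_le fun τ hτ => by
    rw [hT τ hτ]
    exact hs.weight_mul_norm_le_lyapunovSeminorm (hst hτ) x

end WeightedBoundAt

end Lyapunov

section Dichotomy

variable {E : Type*} [NormedAddCommGroup E] [NormedSpace ℝ E]
  {U V : ℝ → ℝ → E →L[ℝ] E} {P : ℝ → E →L[ℝ] E} {h k N : ℝ → ℝ} {r s t τ : ℝ}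

theorem ProjectorFamily.apply_apply (hP : ProjectorFamily P) (ht : 0 ≤ t) (x : E) :
    P t (P t x) = P t x :=
  DFunLike.congr_fun (hP t ht) x

theorem ProjectorFamily.apply_compl (hP : ProjectorFamily P) (ht : 0 ≤ t) (x : E) :
    P t (x - P t x) = 0 := by
  rw [map_sub, hP.apply_apply ht, sub_self]

theorem EvolutionOperator.self_apply (hU : EvolutionOperator U) (ht : 0 ≤ t) (x : E) :
    U t t x = x :=
  DFunLike.congr_fun (hU.1 t ht) x

theorem EvolutionOperator.apply_apply (hU : EvolutionOperator U) (hr : 0 ≤ r) (hrs : r ≤ s)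
    (hst : s ≤ t) (x : E) : U t s (U s r x) = U t r x :=
  (DFunLike.congr_fun (hU.2 t s r hr hrs hst) x).symm

theorem InvariantFor.apply_eq_zero (hPU : InvariantFor U P) (hs : 0 ≤ s) (hst : s ≤ t) {x : E}
    (hx : P s x = 0) : P t (U t s x) = 0 := by
  rw [← hPU t s hs hst, hx, map_zero]

/-- `V t s : Ker P t → Ker P s` is inverse to the restriction `U t s : Ker P s → Ker P t`, for all
`t ≥ s ≥ 0`. Nothing is said about `V t s` outside `Ker P t`. -/
structure IsKernelInverse (U V : ℝ → ℝ → E →L[ℝ] E) (P : ℝ → E →L[ℝ] E) : Prop where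
  mapsTo : ∀ t s, 0 ≤ s → s ≤ t → MapsTo (V t s) {x | P t x = 0} {x | P s x = 0}
  invOn : ∀ t s, 0 ≤ s → s ≤ t → InvOn (V t s) (U t s) {x | P s x = 0} {x | P t x = 0}

namespace IsKernelInverse

theorem of_compl
    (hUV : ∀ t s, 0 ≤ s → s ≤ t → ∀ x, U t s (V t s (x - P t x)) = x - P t x)
    (hVU : ∀ t s, 0 ≤ s → s ≤ t → ∀ x, V t s (U t s (x - P s x)) = x - P s x)
    (hPV : ∀ t s, 0 ≤ s → s ≤ t → ∀ x,
      V t s (x - P t x) = V t s (x - P t x) - P s (V t s (x - P t x))) :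
    IsKernelInverse U V P where
  mapsTo t s hs hst x (hx : P t x = 0) := 
    sub_eq_self.1 (by simpa only [hx, sub_zero] using (hPV t s hs hst x).symm)
  invOn t s hs hst :=
    ⟨fun x (hx : P s x = 0) => by simpa [hx] using hVU t s hs hst x,
      fun x (hx : P t x = 0) => by simpa [hx] using hUV t s hs hst x⟩

theorem self_apply (hV : IsKernelInverse U V P) (hU : EvolutionOperator U) (ht : 0 ≤ t) {x : E}
    (hx : P t x = 0) : V t t x = x := by
  simpa only [hU.self_apply ht] using (hV.invOn t t ht le_rfl).1 hx

theorem apply_apply (hV : IsKernelInverse U V P) (hU : EvolutionOperator U) (hr : 0 ≤ r)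
    (hrs : r ≤ s) (hst : s ≤ t) {x : E} (hx : P t x = 0) : V s r (V t s x) = V t r x := by
  have hs := hr.trans hrs
  have hVs : P s (V t s x) = 0 := hV.mapsTo t s hs hst hx
  have hVr : P r (V s r (V t s x)) = 0 := hV.mapsTo s r hr hrs hVs
  calc V s r (V t s x) = V t r (U t r (V s r (V t s x))) :=
        ((hV.invOn t r hr (hrs.trans hst)).1 hVr).symm
    _ = V t r (U t s (U s r (V s r (V t s x)))) := by rw [hU.apply_apply hr hrs hst]
    _ = V t r (U t s (V t s x)) := by rw [(hV.invOn s r hr hrs).2 hVs]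
    _ = V t r x := by rw [(hV.invOn t s hs hst).2 hx]

end IsKernelInverse

/-- `N` is a bound for the `(h,k)`-dichotomy of `(U,P)`, with the lower estimate for `U` on `Ker P`
expressed as an upper estimate for its inverse `V`. -/
structure IsDichotomyBound (U V : ℝ → ℝ → E →L[ℝ] E) (P : ℝ → E →L[ℝ] E) (h k N : ℝ → ℝ) :
    Prop where
  stable : ∀ t s, 0 ≤ s → s ≤ t → ∀ x, h t * ‖U t s (P s x)‖ ≤ N s * (h s * ‖P s x‖)
  unstable : ∀ t s, 0 ≤ s → s ≤ t → ∀ x,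
    k t * ‖V t s (x - P t x)‖ ≤ N t * (k s * ‖x - P t x‖)

theorem dichotomic_iff_exists_isDichotomyBound (hP : ProjectorFamily P) (hPU : InvariantFor U P)
    (hV : IsKernelInverse U V P) :
    Dichotomic U P h k ↔ ∃ N, Nondecr1 N ∧ IsDichotomyBound U V P h k N := by
  refine exists_congr fun N => and_congr_right fun _ => ⟨fun hd => ⟨fun t s hs hst x =>
    (hd t s hs hst x).1, fun t s hs hst x => ?_⟩, fun hd t s hs hst x =>
    ⟨hd.stable t s hs hst x, ?_⟩⟩
  · have hQ := hP.apply_compl (hs.trans hst) x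
    have hPV : P s (V t s (x - P t x)) = 0 := hV.mapsTo t s hs hst hQ
    simpa only [hPV, sub_zero, (hV.invOn t s hs hst).2 hQ] using
      (hd t s hs hst (V t s (x - P t x))).2
  · have hQ := hP.apply_compl hs x
    simpa only [hPU.apply_eq_zero hs hst hQ, sub_zero, (hV.invOn t s hs hst).1 hQ] using
      hd.unstable t s hs hst (U t s (x - P s x))

/-- The stable part `U(τ,t)P(t)` of the evolution. -/
noncomputable def stablePart (U : ℝ → ℝ → E →L[ℝ] E) (P : ℝ → E →L[ℝ] E) (τ t : ℝ) : E →L[ℝ] E :=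
  (U τ t).comp (P t)

/-- The unstable part `V(t,r)Q(t)` of the evolution, which runs backwards in time. As for
`stablePart`, the target time `r` comes first. -/
noncomputable def unstablePart (V : ℝ → ℝ → E →L[ℝ] E) (P : ℝ → E →L[ℝ] E) (r t : ℝ) :
    E →L[ℝ] E :=
  (V t r).comp (ContinuousLinearMap.id ℝ E - P t)

theorem stablePart_apply (x : E) : stablePart U P τ t x = U τ t (P t x) := rfl

theorem unstablePart_apply (x : E) : unstablePart V P r t x = V t r (x - P t x) := rfl

theorem stablePart_self_apply (hU : EvolutionOperator U) (ht : 0 ≤ t) (x : E) :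
    stablePart U P t t x = P t x :=
  hU.self_apply ht _

theorem unstablePart_self_apply (hU : EvolutionOperator U) (hP : ProjectorFamily P)
    (hV : IsKernelInverse U V P) (ht : 0 ≤ t) (x : E) : unstablePart V P t t x = x - P t x :=
  hV.self_apply hU ht (hP.apply_compl ht x)

theorem stablePart_stablePart (hU : EvolutionOperator U) (hP : ProjectorFamily P)
    (hPU : InvariantFor U P) (hs : 0 ≤ s) (hst : s ≤ t) (htτ : t ≤ τ) (x : E) :
    stablePart U P τ t (stablePart U P t s x) = stablePart U P τ s x := by
  simp only [stablePart_apply, ← hPU t s hs hst, hP.apply_apply hs, hU.apply_apply hs hst htτ]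

theorem unstablePart_unstablePart (hU : EvolutionOperator U) (hP : ProjectorFamily P)
    (hV : IsKernelInverse U V P) (hr : 0 ≤ r) (hrs : r ≤ s) (hst : s ≤ t) (x : E) :
    unstablePart V P r s (unstablePart V P s t x) = unstablePart V P r t x := by
  have hQ := hP.apply_compl (hr.trans (hrs.trans hst)) x
  have hPV : P s (V t s (x - P t x)) = 0 := hV.mapsTo t s (hr.trans hrs) hst hQ
  simp only [unstablePart_apply, hPV, sub_zero, hV.apply_apply hU hr hrs hst hQ]

/-- The Lyapunov norm `|||·|||_t` of a dichotomy. The unstable part carries the weight `k⁻¹`, since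
it runs backwards in time. -/
noncomputable def dichotomySeminorm (U V : ℝ → ℝ → E →L[ℝ] E) (P : ℝ → E →L[ℝ] E) (h k : ℝ → ℝ)
    (t : ℝ) : Seminorm ℝ E :=
  lyapunovSeminorm h (stablePart U P) Ici t + lyapunovSeminorm k⁻¹ (unstablePart V P) (Icc 0) t

theorem dichotomySeminorm_apply (x : E) :
    dichotomySeminorm U V P h k t x = lyapunovSeminorm h (stablePart U P) Ici t x +
      lyapunovSeminorm k⁻¹ (unstablePart V P) (Icc 0) t x := rfl

namespace IsDichotomyBound

theorem weightedBoundAt_stablePart (hN : IsDichotomyBound U V P h k N) (hU : EvolutionOperator U)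
    (hh : ∀ t, 0 ≤ t → 0 < h t) (ht : 0 ≤ t) :
    WeightedBoundAt h (stablePart U P) Ici t (N t) where
  mem_self := self_mem_Ici
  weight_pos τ hτ := hh τ (ht.trans hτ)
  weight_mul_norm_le τ hτ x := by
    simpa only [stablePart_self_apply hU ht, stablePart_apply] using hN.stable τ t ht hτ x

theorem weightedBoundAt_unstablePart (hN : IsDichotomyBound U V P h k N)
    (hU : EvolutionOperator U) (hP : ProjectorFamily P) (hV : IsKernelInverse U V P)
    (hk : ∀ t, 0 ≤ t → 0 < k t) (ht : 0 ≤ t) :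
    WeightedBoundAt k⁻¹ (unstablePart V P) (Icc 0) t (N t) where
  mem_self := ⟨ht, le_rfl⟩
  weight_pos r hr := inv_pos.2 (hk r hr.1)
  weight_mul_norm_le r hr x := by
    rw [unstablePart_self_apply hU hP hV ht, unstablePart_apply, Pi.inv_apply, Pi.inv_apply,
      mul_left_comm (N t), inv_mul_le_iff₀ (hk r hr.1), mul_left_comm (k r),
      le_inv_mul_iff₀ (hk t ht), mul_left_comm (k r)]
    exact hN.unstable t r hr.1 hr.2 x

theorem norm_le_dichotomySeminorm (hN : IsDichotomyBound U V P h k N) (hU : EvolutionOperator U)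
    (hP : ProjectorFamily P) (hV : IsKernelInverse U V P) (hh : ∀ t, 0 ≤ t → 0 < h t)
    (hk : ∀ t, 0 ≤ t → 0 < k t) (ht : 0 ≤ t) (x : E) :
    ‖x‖ ≤ dichotomySeminorm U V P h k t x :=
  calc ‖x‖ = ‖P t x + (x - P t x)‖ := by rw [add_sub_cancel]
    _ ≤ ‖P t x‖ + ‖x - P t x‖ := norm_add_le _ _
    _ = ‖stablePart U P t t x‖ + ‖unstablePart V P t t x‖ := by
      rw [stablePart_self_apply hU ht, unstablePart_self_apply hU hP hV ht]
    _ ≤ dichotomySeminorm U V P h k t x :=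
      add_le_add ((hN.weightedBoundAt_stablePart hU hh ht).norm_self_le_lyapunovSeminorm x)
        ((hN.weightedBoundAt_unstablePart hU hP hV hk ht).norm_self_le_lyapunovSeminorm x)

theorem dichotomySeminorm_le (hN : IsDichotomyBound U V P h k N) (hU : EvolutionOperator U)
    (hP : ProjectorFamily P) (hV : IsKernelInverse U V P) (hh : ∀ t, 0 ≤ t → 0 < h t)
    (hk : ∀ t, 0 ≤ t → 0 < k t) (ht : 0 ≤ t) (x : E) :
    dichotomySeminorm U V P h k t x ≤ N t * (‖P t x‖ + ‖x - P t x‖) :=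
  calc dichotomySeminorm U V P h k t x
      ≤ N t * ‖stablePart U P t t x‖ + N t * ‖unstablePart V P t t x‖ :=
      add_le_add ((hN.weightedBoundAt_stablePart hU hh ht).lyapunovSeminorm_le x)
        ((hN.weightedBoundAt_unstablePart hU hP hV hk ht).lyapunovSeminorm_le x)
    _ = N t * (‖P t x‖ + ‖x - P t x‖) := by
      rw [stablePart_self_apply hU ht, unstablePart_self_apply hU hP hV ht, mul_add]

theorem compatibleNorms_dichotomySeminorm (hN : IsDichotomyBound U V P h k N) (hN₁ : Nondecr1 N)
    (hU : EvolutionOperator U) (hP : ProjectorFamily P) (hV : IsKernelInverse U V P)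
    (hh : ∀ t, 0 ≤ t → 0 < h t) (hk : ∀ t, 0 ≤ t → 0 < k t) :
    CompatibleNorms P fun t => dichotomySeminorm U V P h k t :=
  ⟨fun _ ht => isNormOn_of_norm_le _ (hN.norm_le_dichotomySeminorm hU hP hV hh hk ht), N, hN₁,
    fun _ ht x => ⟨hN.norm_le_dichotomySeminorm hU hP hV hh hk ht x,
      hN.dichotomySeminorm_le hU hP hV hh hk ht x⟩⟩

theorem mul_dichotomySeminorm_stable_le (hN : IsDichotomyBound U V P h k N)
    (hU : EvolutionOperator U) (hP : ProjectorFamily P) (hPU : InvariantFor U P)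
    (hV : IsKernelInverse U V P) (hh : ∀ t, 0 ≤ t → 0 < h t) (hk : ∀ t, 0 ≤ t → 0 < k t)
    (hs : 0 ≤ s) (hst : s ≤ t) (x : E) :
    h t * dichotomySeminorm U V P h k t (U t s (P s x)) ≤
      h s * dichotomySeminorm U V P h k s (P s x) := by
  have ht := hs.trans hst
  have unstable_eq_zero :
      lyapunovSeminorm k⁻¹ (unstablePart V P) (Icc 0) t (U t s (P s x)) = 0 := by
    refine (hN.weightedBoundAt_unstablePart hU hP hV hk ht).lyapunovSeminorm_eq_zero ?_
    rw [unstablePart_self_apply hU hP hV ht, ← hPU t s hs hst, hP.apply_apply hs, sub_self]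
  have stable_le : h t * lyapunovSeminorm h (stablePart U P) Ici t (U t s (P s x)) ≤
      h s * lyapunovSeminorm h (stablePart U P) Ici s (P s x) := by
    simpa only [stablePart_apply, hP.apply_apply hs] using
      (hN.weightedBoundAt_stablePart hU hh hs).weight_mul_lyapunovSeminorm_map_le
        (hN.weightedBoundAt_stablePart hU hh ht) (Ici_subset_Ici.2 hst) (x := P s x)
        fun τ hτ => stablePart_stablePart hU hP hPU hs hst hτ _
  rw [dichotomySeminorm_apply, unstable_eq_zero, add_zero]
  exact stable_le.trans (mul_le_mul_of_nonneg_left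
    (le_add_of_nonneg_right (apply_nonneg _ _)) (hh s hs).le)

theorem mul_dichotomySeminorm_unstable_le (hN : IsDichotomyBound U V P h k N)
    (hU : EvolutionOperator U) (hP : ProjectorFamily P) (hV : IsKernelInverse U V P)
    (hh : ∀ t, 0 ≤ t → 0 < h t) (hk : ∀ t, 0 ≤ t → 0 < k t)
    (hs : 0 ≤ s) (hst : s ≤ t) (x : E) :
    k t * dichotomySeminorm U V P h k s (V t s (x - P t x)) ≤
      k s * dichotomySeminorm U V P h k t (x - P t x) := by
  have ht := hs.trans hst
  have hQ := hP.apply_compl ht x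
  have stable_eq_zero :
      lyapunovSeminorm h (stablePart U P) Ici s (V t s (x - P t x)) = 0 := by
    refine (hN.weightedBoundAt_stablePart hU hh hs).lyapunovSeminorm_eq_zero ?_
    rw [stablePart_self_apply hU hs]
    exact hV.mapsTo t s hs hst hQ
  have unstable_le :
      k t * lyapunovSeminorm k⁻¹ (unstablePart V P) (Icc 0) s (V t s (x - P t x)) ≤
        k s * lyapunovSeminorm k⁻¹ (unstablePart V P) (Icc 0) t (x - P t x) := by
    have hle := (hN.weightedBoundAt_unstablePart hU hP hV hk ht).weight_mul_lyapunovSeminorm_map_le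
      (hN.weightedBoundAt_unstablePart hU hP hV hk hs) (Icc_subset_Icc_right hst)
      (x := x - P t x) fun r hr => unstablePart_unstablePart hU hP hV hr.1 hr.2 hst _
    simp only [unstablePart_apply, hQ, sub_zero, Pi.inv_apply] at hle
    rwa [inv_mul_le_iff₀ (hk s hs), mul_left_comm, le_inv_mul_iff₀ (hk t ht)] at hle
  rw [dichotomySeminorm_apply, stable_eq_zero, zero_add]
  exact unstable_le.trans (mul_le_mul_of_nonneg_left
    (le_add_of_nonneg_left (apply_nonneg _ _)) (hk s hs).le)

end IsDichotomyBound

theorem exists_isDichotomyBound_of_compatibleNorms {nn : ℝ → E → ℝ} (hP : ProjectorFamily P)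
    (hh : ∀ t, 0 ≤ t → 0 < h t) (hk : ∀ t, 0 ≤ t → 0 < k t) (hnn : CompatibleNorms P nn)
    (hd : ∀ t s, 0 ≤ s → s ≤ t → ∀ x,
      h t * nn t (U t s (P s x)) ≤ h s * nn s (P s x) ∧
      k t * nn s (V t s (x - P t x)) ≤ k s * nn t (x - P t x)) :
    ∃ N, Nondecr1 N ∧ IsDichotomyBound U V P h k N := by
  obtain ⟨-, N, hN₁, hN⟩ := hnn
  refine ⟨N, hN₁, fun t s hs hst x => ?_, fun t s hs hst x => ?_⟩
  all_goals have ht := hs.trans hst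
  · have nn_le : nn s (P s x) ≤ N s * ‖P s x‖ := by
      simpa [hP.apply_apply hs] using (hN s hs (P s x)).2
    exact mul_le_mul_mul_of_mul_le_mul (hh t ht).le (hh s hs).le (hN t ht _).1
      (hd t s hs hst x).1 nn_le
  · have nn_le : nn t (x - P t x) ≤ N t * ‖x - P t x‖ := by
      simpa [hP.apply_apply ht] using (hN t ht (x - P t x)).2
    exact mul_le_mul_mul_of_mul_le_mul (hk t ht).le (hk s hs).le (hN s hs _).1
      (hd t s hs hst x).2 nn_le

theorem stmt6_general (hU : EvolutionOperator U) (hP : ProjectorFamily P)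
    (hPU : InvariantFor U P) (hV : IsKernelInverse U V P)
    (hh : ∀ t, 0 ≤ t → 0 < h t) (hk : ∀ t, 0 ≤ t → 0 < k t) :
    Dichotomic U P h k ↔
      ∃ nn : ℝ → E → ℝ, CompatibleNorms P nn ∧
        ∀ t s : ℝ, 0 ≤ s → s ≤ t → ∀ x : E,
          h t * nn t (U t s (P s x)) ≤ h s * nn s (P s x) ∧
          k t * nn s (V t s (x - P t x)) ≤ k s * nn t (x - P t x) := by
  rw [dichotomic_iff_exists_isDichotomyBound hP hPU hV]
  constructor
  · rintro ⟨N, hN₁, hN⟩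
    exact ⟨fun t => dichotomySeminorm U V P h k t,
      hN.compatibleNorms_dichotomySeminorm hN₁ hU hP hV hh hk, fun t s hs hst x =>
      ⟨hN.mul_dichotomySeminorm_stable_le hU hP hPU hV hh hk hs hst x,
        hN.mul_dichotomySeminorm_unstable_le hU hP hV hh hk hs hst x⟩⟩
  · rintro ⟨nn, hnn, hd⟩
    exact exists_isDichotomyBound_of_compatibleNorms hP hh hk hnn hd

end Dichotomy

/-- Theorem 3.7 : `(U,P)` is `(h,k)`-dichotomic iff there exists a family of
norms compatible with `P` satisfying `(hd₁'')` and `(kd₂'')`. -/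
theorem stmt6 (U V : ℝ → ℝ → X →L[ℝ] X) (P : ℝ → X →L[ℝ] X) (h k : ℝ → ℝ)
    (hU : EvolutionOperator U) (hP : ProjectorFamily P) (hC : CompatibleWith U P)
    (hh : GrowthRate h) (hk : GrowthRate k)
    (hv1 : ∀ t s : ℝ, 0 ≤ s → s ≤ t → ∀ x : X, U t s (V t s (x - P t x)) = x - P t x)
    (hv2 : ∀ t s : ℝ, 0 ≤ s → s ≤ t → ∀ x : X, V t s (U t s (x - P s x)) = x - P s x)
    (hv3 : ∀ t s t₀ : ℝ, 0 ≤ t₀ → t₀ ≤ s → s ≤ t → ∀ x : X,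
      V t t₀ (x - P t x) = V s t₀ (V t s (x - P t x)))
    (hv4 : ∀ t s : ℝ, 0 ≤ s → s ≤ t → ∀ x : X,
      V t s (x - P t x) = V t s (x - P t x) - P s (V t s (x - P t x)))
    :
    Dichotomic U P h k ↔
      ∃ nn : ℝ → X → ℝ, CompatibleNorms P nn ∧
        ∀ t s : ℝ, 0 ≤ s → s ≤ t → ∀ x : X,
          h t * nn t (U t s (P s x)) ≤ h s * nn s (P s x) ∧
          k t * nn s (V t s (x - P t x)) ≤ k s * nn t (x - P t x) :=
  stmt6_general hU hP hC.1 (.of_compl hv1 hv2 hv4) hh.pos hk.pos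
end

section
/- Let X = ℝ, let h, k be growth rates such that h(t)²/((t+1)ln(t+e)) ≥ g(t) for all t ≥ 0 for some growth rate g, let P : ℝ₊ → B(X) be a family of projectors with complementary family Q, and define U(t,s) = (h(t)/h(s))·((s+1)ln(s+e))/((t+1)ln(t+e))·P(s) + (k(s)/k(t))·((s+1)ln(s+e))/((t+1)ln(t+e))·Q(s) for t ≥ s ≥ 0, assuming P is invariant for U. Then the pair (U,P) has (h,k)-growth (with nondecreasing function M(t) = (t+1)ln(t+e)), but if P(s) ≠ 0 for s = 0 then (U,P) is NOT (h,k)-dichotomic. -/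
open Set Filter Real

variable {X : Type*} [NormedAddCommGroup X] [NormedSpace ℝ X] [CompleteSpace X]

theorem GrowthRate.not_isBoundedUnder_of_le {f g : ℝ → ℝ} (hg : GrowthRate g)
    (hgf : ∀ t, 0 ≤ t → g t ≤ f t) : ¬ IsBoundedUnder (· ≤ ·) atTop f :=
  not_isBoundedUnder_of_tendsto_atTop
    (tendsto_atTop_mono' atTop ((eventually_ge_atTop 0).mono hgf) hg.2.2)

theorem nondecr1_add_one : Nondecr1 fun t ↦ t + 1 :=
  ⟨(monotone_id.add_const 1).monotoneOn _, fun _ ht ↦ le_add_of_nonneg_left ht⟩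

theorem nondecr1_log_add_exp_one : Nondecr1 fun t ↦ log (t + exp 1) := by
  refine ⟨fun s (hs : 0 ≤ s) t _ hst ↦ ?_, fun t ht ↦ ?_⟩
  · exact log_le_log (by positivity) (by gcongr)
  · exact (le_log_iff_exp_le (by positivity)).mpr (le_add_of_nonneg_left ht)

theorem Nondecr1.mul {M N : ℝ → ℝ} (hM : Nondecr1 M) (hN : Nondecr1 N) :
    Nondecr1 fun t ↦ M t * N t :=
  ⟨hM.1.mul hN.1 (fun t ht ↦ zero_le_one.trans (hM.2 t ht))
      (fun t ht ↦ zero_le_one.trans (hN.2 t ht)),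
    fun t ht ↦ one_le_mul_of_one_le_of_one_le (hM.2 t ht) (hN.2 t ht)⟩

theorem ProjectorFamily.apply_apply_s15 {E : Type*} [NormedAddCommGroup E] [NormedSpace ℝ E]
    {P : ℝ → E →L[ℝ] E} (hP : ProjectorFamily P) {s : ℝ} (hs : 0 ≤ s) (x : E) :
    P s (P s x) = P s x :=
  DFunLike.congr_fun (hP s hs) x

/-- The evolution that multiplies by `h t / h s` on the range of `P s` and by `k s / k t` on its
kernel, in both cases times the quotient `a s / a t` of values of a weight `a`. It generalizes the
operator of Example 2.16. Nothing is required of `U t s` outside `t ≥ s ≥ 0`. -/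
def IsWeightedEvolution {E : Type*} [NormedAddCommGroup E] [NormedSpace ℝ E]
    (U : ℝ → ℝ → E →L[ℝ] E) (P : ℝ → E →L[ℝ] E) (h k a : ℝ → ℝ) : Prop :=
  ∀ t s : ℝ, 0 ≤ s → s ≤ t → ∀ x : E,
    U t s x = (h t / h s * (a s / a t)) • P s x + (k s / k t * (a s / a t)) • (x - P s x)

section WeightedEvolution

variable {E : Type*} [NormedAddCommGroup E] [NormedSpace ℝ E]
  {U : ℝ → ℝ → E →L[ℝ] E} {P : ℝ → E →L[ℝ] E} {h k a : ℝ → ℝ} {s t : ℝ}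

namespace IsWeightedEvolution

theorem apply_proj (hU : IsWeightedEvolution U P h k a) (hP : ProjectorFamily P)
    (hs : 0 ≤ s) (hst : s ≤ t) (x : E) :
    U t s (P s x) = (h t / h s * (a s / a t)) • P s x := by
  rw [hU t s hs hst, hP.apply_apply_s15 hs, sub_self, smul_zero, add_zero]

theorem apply_sub_proj (hU : IsWeightedEvolution U P h k a) (hP : ProjectorFamily P)
    (hs : 0 ≤ s) (hst : s ≤ t) (x : E) :
    U t s (x - P s x) = (k s / k t * (a s / a t)) • (x - P s x) := by
  rw [hU t s hs hst, map_sub, hP.apply_apply_s15 hs, sub_self, smul_zero, zero_add, sub_zero]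

theorem mul_norm_apply_proj_le (hU : IsWeightedEvolution U P h k a) (hP : ProjectorFamily P)
    (hs : 0 ≤ s) (hst : s ≤ t) (hhs : 0 < h s) (hht : 0 ≤ h t) (has : 0 ≤ a s) (hat : 1 ≤ a t)
    (x : E) :
    h s * ‖U t s (P s x)‖ ≤ a s * (h t * ‖P s x‖) := by
  rw [hU.apply_proj hP hs hst, norm_smul_of_nonneg (by positivity)]
  calc h s * (h t / h s * (a s / a t) * ‖P s x‖)
      = a s * (h t * ‖P s x‖) / a t := by field_simp
    _ ≤ a s * (h t * ‖P s x‖) := div_le_self (by positivity) hat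

theorem mul_norm_sub_proj_le (hU : IsWeightedEvolution U P h k a) (hP : ProjectorFamily P)
    (hs : 0 ≤ s) (hst : s ≤ t) (hks : 0 ≤ k s) (hkt : 0 < k t) (has : 1 ≤ a s) (hat : 0 < a t)
    (x : E) :
    k s * ‖x - P s x‖ ≤ a t * (k t * ‖U t s (x - P s x)‖) := by
  rw [hU.apply_sub_proj hP hs hst, norm_smul_of_nonneg (by positivity)]
  calc k s * ‖x - P s x‖
      ≤ a s * (k s * ‖x - P s x‖) := le_mul_of_one_le_left (by positivity) has
    _ = a t * (k t * (k s / k t * (a s / a t) * ‖x - P s x‖)) := by field_simp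

theorem mul_norm_apply_proj (hU : IsWeightedEvolution U P h k a) (hP : ProjectorFamily P)
    (hs : 0 ≤ s) (hst : s ≤ t) (hhs : 0 ≤ h s) (hht : 0 ≤ h t) (has : 0 ≤ a s) (hat : 0 ≤ a t)
    (x : E) :
    h t * ‖U t s (P s x)‖ = h t ^ 2 / a t * (a s / h s * ‖P s x‖) := by
  rw [hU.apply_proj hP hs hst, norm_smul_of_nonneg (by positivity)]
  ring

end IsWeightedEvolution

theorem Dichotomic.isBoundedUnder_mul_norm_apply_proj (hD : Dichotomic U P h k) (hs : 0 ≤ s)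
    (x : E) :
    IsBoundedUnder (· ≤ ·) atTop fun t ↦ h t * ‖U t s (P s x)‖ := by
  obtain ⟨N, -, hN⟩ := hD
  exact isBoundedUnder_of_eventually_le
    ((eventually_ge_atTop s).mono fun t hst ↦ (hN t s hs hst x).1)

theorem IsWeightedEvolution.isBoundedUnder_sq_div_of_dichotomic
    (hU : IsWeightedEvolution U P h k a) (hP : ProjectorFamily P)
    (hh : ∀ t, 0 ≤ t → 0 < h t) (ha : ∀ t, 0 ≤ t → 0 < a t)
    (hs : 0 ≤ s) (hPs : P s ≠ 0) (hD : Dichotomic U P h k) :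
    IsBoundedUnder (· ≤ ·) atTop fun t ↦ h t ^ 2 / a t := by
  obtain ⟨x, hx⟩ : ∃ x, P s x ≠ 0 := DFunLike.exists_ne hPs
  have hc : 0 < a s / h s * ‖P s x‖ :=
    mul_pos (div_pos (ha s hs) (hh s hs)) (norm_pos_iff.mpr hx)
  obtain ⟨C, hC⟩ := (hD.isBoundedUnder_mul_norm_apply_proj hs x).eventually_le
  refine isBoundedUnder_of_eventually_le (a := C / (a s / h s * ‖P s x‖)) ?_
  filter_upwards [hC, eventually_ge_atTop s] with t htC hst
  have ht : 0 ≤ t := hs.trans hst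
  rwa [le_div_iff₀ hc, ← hU.mul_norm_apply_proj hP hs hst (hh s hs).le (hh t ht).le
    (ha s hs).le (ha t ht).le]

theorem stmt15_general (hh : ∀ t, 0 ≤ t → 0 < h t) (hk : ∀ t, 0 ≤ t → 0 < k t)
    (ha : Nondecr1 a) (hha : ¬ IsBoundedUnder (· ≤ ·) atTop fun t ↦ h t ^ 2 / a t)
    (hP : ProjectorFamily P) (hU : IsWeightedEvolution U P h k a) :
    HasGrowth U P h k ∧
    (∀ t s : ℝ, 0 ≤ s → s ≤ t → ∀ x : E,
      h s * ‖U t s (P s x)‖ ≤ a s * (h t * ‖P s x‖) ∧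
      k s * ‖x - P s x‖ ≤ a t * (k t * ‖U t s (x - P s x)‖)) ∧
    ∀ s, 0 ≤ s → P s ≠ 0 → ¬ Dichotomic U P h k := by
  have ha_pos (t : ℝ) (ht : 0 ≤ t) : 0 < a t := one_pos.trans_le (ha.2 t ht)
  have growth (t s : ℝ) (hs : 0 ≤ s) (hst : s ≤ t) (x : E) :
      h s * ‖U t s (P s x)‖ ≤ a s * (h t * ‖P s x‖) ∧
      k s * ‖x - P s x‖ ≤ a t * (k t * ‖U t s (x - P s x)‖) := by
    have ht : 0 ≤ t := hs.trans hst
    constructor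
    · exact hU.mul_norm_apply_proj_le hP hs hst (hh s hs) (hh t ht).le (ha_pos s hs).le
        (ha.2 t ht) x
    · exact hU.mul_norm_sub_proj_le hP hs hst (hk s hs).le (hk t ht) (ha.2 s hs) (ha_pos t ht) x
  exact ⟨⟨a, ha, growth⟩, growth, fun s hs hPs hD ↦
    hha (hU.isBoundedUnder_sq_div_of_dichotomic hP hh ha_pos hs hPs hD)⟩

end WeightedEvolution

/-- Example 2.16 : on `X = ℝ`, for growth rates `h, k` with
`h(t)² / ((t+1)ln(t+e)) ≥ g(t)` for some growth rate `g`, the evolution operator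
`U(t,s) = (h t / h s)·((s+1)ln(s+e))/((t+1)ln(t+e))·P s
        + (k s / k t)·((s+1)ln(s+e))/((t+1)ln(t+e))·Q s`
(with `P` an invariant family of projectors and `Q = I - P`) has `(h,k)`-growth
with `M t = (t+1)ln(t+e)`, but the pair `(U,P)` is not `(h,k)`-dichotomic
(provided `P 0 ≠ 0`). -/
theorem stmt15 (h k g : ℝ → ℝ)
    (hh : GrowthRate h) (hk : GrowthRate k) (hg : GrowthRate g)
    (hhg : ∀ t : ℝ, 0 ≤ t → g t ≤ h t ^ 2 / ((t + 1) * Real.log (t + Real.exp 1)))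
    (P : ℝ → ℝ →L[ℝ] ℝ) (U : ℝ → ℝ → ℝ →L[ℝ] ℝ)
    (hP : ProjectorFamily P)
    (hUdef : ∀ t s : ℝ, 0 ≤ s → s ≤ t → ∀ x : ℝ,
      U t s x =
        ((h t / h s) * (((s + 1) * Real.log (s + Real.exp 1)) /
          ((t + 1) * Real.log (t + Real.exp 1)))) • P s x +
        ((k s / k t) * (((s + 1) * Real.log (s + Real.exp 1)) /
          ((t + 1) * Real.log (t + Real.exp 1)))) • (x - P s x))
    (hInv : InvariantFor U P) :
    HasGrowth U P h k ∧
    (∀ t s : ℝ, 0 ≤ s → s ≤ t → ∀ x : ℝ,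
      h s * ‖U t s (P s x)‖ ≤
        ((s + 1) * Real.log (s + Real.exp 1)) * (h t * ‖P s x‖) ∧
      k s * ‖x - P s x‖ ≤
        ((t + 1) * Real.log (t + Real.exp 1)) * (k t * ‖U t s (x - P s x)‖)) ∧
    (P 0 ≠ 0 → ¬ Dichotomic U P h k) := by
  obtain ⟨hGrowth, hBound, hNot⟩ := stmt15_general hh.pos hk.pos
    (nondecr1_add_one.mul nondecr1_log_add_exp_one) (hg.not_isBoundedUnder_of_le hhg) hP hUdef
  exact ⟨hGrowth, hBound, hNot 0 le_rfl⟩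
end
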